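/- Let R be a Hecke symmetry with parameter q such that j_q ≠ 0 for 2 ≤ j ≤ k. Then the R-symmetrizer S^(k) satisfies S^(k) R_i = R_i S^(k) = q S^(k) and S^(k) R_i⁻¹ = R_i⁻¹ S^(k) = q⁻¹ S^(k) for every 1 ≤ i ≤ k−1. -/

import Mathlib

open Matrix BigOperators

noncomputable section

/-- An `N² × N²` complex matrix, viewed as an operator on `ℂ^N ⊗ ℂ^N`. -/
abbrev RMat (N : ℕ) := Matrix (Fin N × Fin N) (Fin N × Fin N) ℂ

/-- A matrix on the `k`-th tensor power of `ℂ^N`, with entries in `A`. -/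
abbrev TMat (N k : ℕ) (A : Type _) := Matrix (Fin k → Fin N) (Fin k → Fin N) A

/-- The `q`-number `j_q = (q^j - q^{-j})/(q - q^{-1})`. -/
def qNum (q : ℂ) (j : ℕ) : ℂ := (q ^ j - q⁻¹ ^ j) / (q - q⁻¹)

/-- Embedding of an `N²×N²` matrix `R` into the `k`-th tensor power,
acting in the (0-based) tensor factors `i` and `i+1`.  The paper's `R_i`
(1-based) is `embR k R (i-1)`. -/
def embR {N : ℕ} (k : ℕ) (R : RMat N) (i : ℕ) : TMat N k ℂ := fun f g =>
  if h : i + 1 < k then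
    if ∀ j : Fin k, j.val ≠ i → j.val ≠ i + 1 → f j = g j then
      R (f ⟨i, Nat.lt_of_succ_lt h⟩, f ⟨i + 1, h⟩) (g ⟨i, Nat.lt_of_succ_lt h⟩, g ⟨i + 1, h⟩)
    else 0
  else (1 : TMat N k ℂ) f g

/-- `X ⊗ I^{⊗(k-1)}` : the first copy `X_{1̄}` of an `N×N` matrix over `A`. -/
def emb1 {N : ℕ} (k : ℕ) {A : Type _} [Ring A] (X : Matrix (Fin N) (Fin N) A) :
    TMat N k A := fun f g =>
  if h : 0 < k then
    if ∀ j : Fin k, j.val ≠ 0 → f j = g j then X (f ⟨0, h⟩) (g ⟨0, h⟩) else 0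
  else (1 : TMat N k A) f g

/-- Lift a complex matrix to a matrix over the `ℂ`-algebra `A`. -/
def liftC {N k : ℕ} (A : Type _) [Ring A] [Algebra ℂ A] (X : TMat N k ℂ) : TMat N k A :=
  X.map (algebraMap ℂ A)

/-- The copies `X_{1̄}, X_{2̄}, …` of `X` in the `k`-th tensor power:
`copyX k R Rinv X i` is the paper's `X_{\overline{i+1}}`, i.e.
`X_{1̄} = X ⊗ I^{⊗(k-1)}` and `X_{\overline{i+1}} = R_i X_{ī} R_i⁻¹`. -/
def copyX {N : ℕ} (k : ℕ) (R Rinv : RMat N) {A : Type _} [Ring A] [Algebra ℂ A]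
    (X : Matrix (Fin N) (Fin N) A) : ℕ → TMat N k A
  | 0 => emb1 k X
  | i + 1 => liftC A (embR k R i) * copyX k R Rinv X i * liftC A (embR k Rinv i)

/-- The `R`-skew-symmetrizers, on the ambient `k`-th tensor power:
`Asym k R q j` is `A^{(j)}` (acting in the first `j` factors). -/
def Asym {N : ℕ} (k : ℕ) (R : RMat N) (q : ℂ) : ℕ → TMat N k ℂ
  | 0 => 1
  | 1 => 1
  | j + 2 =>
      (qNum q (j + 2))⁻¹ •
        (Asym k R q (j + 1) *
          ((q ^ (j + 1)) • (1 : TMat N k ℂ) - (qNum q (j + 1)) • embR k R j) *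
          Asym k R q (j + 1))

/-- The `R`-symmetrizers, on the ambient `k`-th tensor power:
`Ssym k R q j` is `S^{(j)}` (acting in the first `j` factors). -/
def Ssym {N : ℕ} (k : ℕ) (R : RMat N) (q : ℂ) : ℕ → TMat N k ℂ
  | 0 => 1
  | 1 => 1
  | j + 2 =>
      (qNum q (j + 2))⁻¹ •
        (Ssym k R q (j + 1) *
          ((q⁻¹ ^ (j + 1)) • (1 : TMat N k ℂ) + (qNum q (j + 1)) • embR k R j) *
          Ssym k R q (j + 1))

/-- The braid relation `R₁₂ R₂₃ R₁₂ = R₂₃ R₁₂ R₂₃` on `(ℂ^N)^{⊗3}`. -/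
def IsBraiding {N : ℕ} (R : RMat N) : Prop :=
  embR 3 R 0 * embR 3 R 1 * embR 3 R 0 = embR 3 R 1 * embR 3 R 0 * embR 3 R 1

/-- The Hecke condition `(q·I − R)(q⁻¹·I + R) = 0`. -/
def HeckeCond {N : ℕ} (R : RMat N) (q : ℂ) : Prop :=
  (q • (1 : RMat N) - R) * (q⁻¹ • (1 : RMat N) + R) = 0

/-- The Reflection Equation `R M₁ R M₁ = M₁ R M₁ R` (on `(ℂ^N)^{⊗2}`,
with entries in `A`). -/
def RERel {N : ℕ} (R : RMat N) {A : Type _} [Ring A] [Algebra ℂ A]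
    (M : Matrix (Fin N) (Fin N) A) : Prop :=
  liftC A (embR 2 R 0) * emb1 2 M * liftC A (embR 2 R 0) * emb1 2 M
    = emb1 2 M * liftC A (embR 2 R 0) * emb1 2 M * liftC A (embR 2 R 0)

/-- The relation `R⁻¹ D₁ R⁻¹ D₁ = D₁ R⁻¹ D₁ R⁻¹` on the matrix `D`,
where `Rinv = R⁻¹`. -/
def DDRel {N : ℕ} (Rinv : RMat N) {A : Type _} [Ring A] [Algebra ℂ A]
    (D : Matrix (Fin N) (Fin N) A) : Prop :=
  liftC A (embR 2 Rinv 0) * emb1 2 D * liftC A (embR 2 Rinv 0) * emb1 2 D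
    = emb1 2 D * liftC A (embR 2 Rinv 0) * emb1 2 D * liftC A (embR 2 Rinv 0)

/-- The permutation relations `D₁ R M₁ = R M₁ R⁻¹ D₁ R⁻¹ + I`, where `Rinv = R⁻¹`. -/
def PermRel {N : ℕ} (R Rinv : RMat N) {A : Type _} [Ring A] [Algebra ℂ A]
    (M D : Matrix (Fin N) (Fin N) A) : Prop :=
  emb1 2 D * liftC A (embR 2 R 0) * emb1 2 M
    = liftC A (embR 2 R 0) * emb1 2 M * liftC A (embR 2 Rinv 0) * emb1 2 D *
        liftC A (embR 2 Rinv 0) + 1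

/-- `Ψ` is the skew-inverse of `R`:  `Σ_{j,b} R^{ij}_{ab} Ψ^{bc}_{jd} = δ^i_d δ^c_a`. -/
def SkewInv {N : ℕ} (R Ψ : RMat N) : Prop :=
  ∀ i a c d : Fin N,
    (∑ j : Fin N, ∑ b : Fin N, R (i, j) (a, b) * Ψ (b, c) (j, d))
      = if i = d ∧ c = a then 1 else 0

/-- The matrix `C`, `C^c_d = Σ_i Ψ^{ic}_{id}`. -/
def Cmat {N : ℕ} (Ψ : RMat N) : Matrix (Fin N) (Fin N) ℂ :=
  fun c d => ∑ i : Fin N, Ψ (i, c) (i, d)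

/-- The `R`-trace over all `k` tensor factors: `⟨X⟩_{1…k} = Tr(C^{⊗k} X)`. -/
def rTr {N k : ℕ} {A : Type _} [Ring A] [Algebra ℂ A] (C : Matrix (Fin N) (Fin N) ℂ)
    (X : TMat N k A) : A :=
  ∑ f : Fin k → Fin N, ∑ g : Fin k → Fin N, (∏ j : Fin k, C (f j) (g j)) • X g f

/-- The chain `X_{1̄} X_{2̄} ⋯ X_{n̄}`. -/
def upChain {N : ℕ} (k : ℕ) (R Rinv : RMat N) {A : Type _} [Ring A] [Algebra ℂ A]
    (X : Matrix (Fin N) (Fin N) A) (n : ℕ) : TMat N k A :=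
  ((List.range n).map (copyX k R Rinv X)).prod

/-- The reversed chain `X_{n̄} X_{\overline{n-1}} ⋯ X_{1̄}`. -/
def downChain {N : ℕ} (k : ℕ) (R Rinv : RMat N) {A : Type _} [Ring A] [Algebra ℂ A]
    (X : Matrix (Fin N) (Fin N) A) (n : ℕ) : TMat N k A :=
  ((List.range n).reverse.map (copyX k R Rinv X)).prod

/-- The Capelli chain `L_{1̄}(L_{2̄} + q·1_q I)(L_{3̄} + q²·2_q I) ⋯ (L_{n̄} + q^{n-1}·(n-1)_q I)`
(note `0_q = 0`). -/
def capChainA {N : ℕ} (k : ℕ) (R Rinv : RMat N) (q : ℂ) {A : Type _} [Ring A] [Algebra ℂ A]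
    (L : Matrix (Fin N) (Fin N) A) (n : ℕ) : TMat N k A :=
  ((List.range n).map
    (fun i => copyX k R Rinv L i + ((q ^ i) * qNum q i) • (1 : TMat N k A))).prod

/-- The symmetric Capelli chain
`L_{1̄}(L_{2̄} - q⁻¹·1_q I) ⋯ (L_{n̄} - q^{-(n-1)}·(n-1)_q I)`. -/
def capChainS {N : ℕ} (k : ℕ) (R Rinv : RMat N) (q : ℂ) {A : Type _} [Ring A] [Algebra ℂ A]
    (L : Matrix (Fin N) (Fin N) A) (n : ℕ) : TMat N k A :=
  ((List.range n).map
    (fun i => copyX k R Rinv L i - ((q⁻¹ ^ i) * qNum q i) • (1 : TMat N k A))).prod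

/-- The descending chain `R_{a→b} = R_a R_{a-1} ⋯ R_b` (1-based indices;
identity when `b > a`). -/
def rChainDesc {N : ℕ} (k : ℕ) (R : RMat N) (a b : ℕ) : TMat N k ℂ :=
  ((List.range' b (a + 1 - b)).reverse.map (fun j => embR k R (j - 1))).prod

/-- The ascending chain `R_{b→a} = R_b R_{b+1} ⋯ R_a` (1-based indices;
identity when `b > a`). -/
def rChainAsc {N : ℕ} (k : ℕ) (R : RMat N) (b a : ℕ) : TMat N k ℂ :=
  ((List.range' b (a + 1 - b)).map (fun j => embR k R (j - 1))).prod

/-- Abstract induction step (left version). -/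
lemma hecke_step_left {A : Type*} [Ring A] [Algebra ℂ A] (P E a b : A) (q α β γ n : ℂ)
    (hq : q ≠ 0) (hn : n ≠ 0)
    (hE : n • E = P * (α • (1 : A) + β • a) * P) (hPE : P * E = E) (haE : a * E = q • E)
    (hPb : P * b = b * P) (hb : b * b = (q - q⁻¹) • b + 1) (hbr : a * b * a = b * a * b)
    (hc : α * γ - α * n * q⁻¹ + β * γ * q = 0) :
    b * (E * (γ • (1 : A) + n • b) * E) = q • (E * (γ • (1 : A) + n • b) * E) := by
  have h1 : n • (E * (γ • (1 : A) + n • b) * E)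
      = P * ((α • (1 : A) + β • a) * (γ • (1 : A) + n • b) * E) := by
    have e1 : P * (γ • (1 : A) + n • b) = (γ • (1 : A) + n • b) * P := by
      simp [mul_add, add_mul, hPb]
    calc n • (E * (γ • (1 : A) + n • b) * E)
        = (n • E) * (γ • (1 : A) + n • b) * E := by simp only [smul_mul_assoc]
      _ = P * (α • (1 : A) + β • a) * (P * (γ • (1 : A) + n • b)) * E := by
          rw [hE]; simp only [mul_assoc]
      _ = P * ((α • (1 : A) + β • a) * (γ • (1 : A) + n • b) * (P * E)) := by
          rw [e1]; simp only [mul_assoc]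
      _ = _ := by rw [hPE]
  have h2 : b * (a * (b * E)) = q • (a * (b * E)) := by
    calc b * (a * (b * E)) = (b * a * b) * E := by simp only [mul_assoc]
      _ = a * b * (a * E) := by rw [← hbr]; simp only [mul_assoc]
      _ = _ := by rw [haE]; simp only [mul_smul_comm, mul_assoc]
  have h3 : b * (b * E) = (q - q⁻¹) • (b * E) + E := by
    rw [← mul_assoc, hb, add_mul, one_mul, smul_mul_assoc]
  have h5 : (α • (1 : A) + β • a) * (γ • (1 : A) + n • b) * E
      = (α * γ + β * γ * q) • E + (α * n) • (b * E) + (β * n) • (a * (b * E)) := by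
    simp only [add_mul, mul_add, smul_mul_assoc, mul_smul_comm, one_mul, mul_one, haE, mul_assoc]
    module
  have h4 : b * ((α • (1 : A) + β • a) * (γ • (1 : A) + n • b) * E)
      = q • ((α • (1 : A) + β • a) * (γ • (1 : A) + n • b) * E) := by
    rw [h5]
    simp only [mul_add, mul_smul_comm, h2, h3]
    have hc' : α * γ + β * γ * q = α * n * q⁻¹ := by linear_combination hc
    rw [hc']
    have hqq : α * n = q * (α * n * q⁻¹) := by field_simp
    match_scalars
    · field_simp; ring
    · field_simp
    · ring
  have h6 : n • (b * (E * (γ • (1 : A) + n • b) * E))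
      = n • (q • (E * (γ • (1 : A) + n • b) * E)) := by
    rw [← mul_smul_comm, smul_comm n q, h1, ← mul_assoc, ← hPb, mul_assoc, h4, mul_smul_comm]
  have := congrArg (fun x => n⁻¹ • x) h6
  simpa [smul_smul, hn, inv_mul_cancel_left₀ hn] using this

/-- Abstract induction step (right version), via the opposite algebra. -/
lemma hecke_step_right {A : Type*} [Ring A] [Algebra ℂ A] (P E a b : A) (q α β γ n : ℂ)
    (hq : q ≠ 0) (hn : n ≠ 0)
    (hE : n • E = P * (α • (1 : A) + β • a) * P) (hPE : E * P = E) (haE : E * a = q • E)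
    (hPb : P * b = b * P) (hb : b * b = (q - q⁻¹) • b + 1) (hbr : a * b * a = b * a * b)
    (hc : α * γ - α * n * q⁻¹ + β * γ * q = 0) :
    (E * (γ • (1 : A) + n • b) * E) * b = q • (E * (γ • (1 : A) + n • b) * E) := by
  have := hecke_step_left (A := Aᵐᵒᵖ) (.op P) (.op E) (.op a) (.op b) q α β γ n hq hn
    (by apply MulOpposite.unop_injective; simpa [mul_assoc] using hE)
    (by apply MulOpposite.unop_injective; simpa using hPE)
    (by apply MulOpposite.unop_injective; simpa using haE)
    (by apply MulOpposite.unop_injective; simpa using hPb.symm)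
    (by apply MulOpposite.unop_injective; simpa using hb)
    (by apply MulOpposite.unop_injective; simpa [mul_assoc] using hbr) hc
  have := congrArg MulOpposite.unop this
  simpa [mul_assoc] using this

/-- Split a function on `Fin k` into its part along `φ` and its part off the range of `φ`. -/
def splitE (N : ℕ) {m k : ℕ} (φ : Fin m → Fin k) (hφ : Function.Injective φ) :
    (Fin k → Fin N) ≃ (Fin m → Fin N) × ({j : Fin k // ¬ j ∈ Set.range φ} → Fin N) :=
  haveI : DecidablePred (fun j : Fin k => j ∈ Set.range φ) := Classical.decPred _
  (Equiv.piEquivPiSubtypeProd (fun j : Fin k => j ∈ Set.range φ) (fun _ => Fin N)).trans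
    (Equiv.prodCongr (Equiv.arrowCongr (Equiv.ofInjective φ hφ).symm (Equiv.refl _))
      (Equiv.refl _))

/-- Extension of a matrix on the `m`-th tensor power to the `k`-th one, along `φ`. -/
def extM {N m k : ℕ} (φ : Fin m → Fin k) (hφ : Function.Injective φ) (X : TMat N m ℂ) :
    TMat N k ℂ :=
  (Matrix.kroneckerMap (· * ·) X
    (1 : Matrix ({j : Fin k // ¬ j ∈ Set.range φ} → Fin N) _ ℂ)).submatrix
    (splitE N φ hφ) (splitE N φ hφ)

lemma extM_mul {N m k : ℕ} (φ : Fin m → Fin k) (hφ : Function.Injective φ) (X Y : TMat N m ℂ) :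
    extM φ hφ (X * Y) = extM φ hφ X * extM φ hφ Y := by
  classical
  unfold extM
  rw [Matrix.submatrix_mul_equiv, ← Matrix.mul_kronecker_mul, one_mul]

lemma extM_one {N m k : ℕ} (φ : Fin m → Fin k) (hφ : Function.Injective φ) :
    extM φ hφ (1 : TMat N m ℂ) = 1 := by
  classical
  unfold extM
  rw [Matrix.one_kronecker_one, Matrix.submatrix_one_equiv]

lemma embR_eq_extM {N : ℕ} (m k i s : ℕ) (R : RMat N) (hm : i + m ≤ k) (hs : s + 1 < m)
    (φ : Fin m → Fin k) (hφ : Function.Injective φ) (hv : ∀ j, (φ j).val = i + j.val) :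
    embR k R (i + s) = extM φ hφ (embR m R s) := by
  classical
  ext f g
  have e0 : φ ⟨s, Nat.lt_of_succ_lt hs⟩ = ⟨i + s, by omega⟩ := Fin.ext (hv _)
  have e1 : φ ⟨s + 1, hs⟩ = ⟨i + s + 1, by omega⟩ := Fin.ext (hv _)
  have hfst : ∀ f : Fin k → Fin N, (splitE N φ hφ f).1 = fun j => f (φ j) := fun f => rfl
  have hsnd : ∀ f : Fin k → Fin N, (splitE N φ hφ f).2 = fun j => f j.1 := fun f => rfl
  simp only [extM, Matrix.submatrix_apply, Matrix.kroneckerMap_apply, hfst, hsnd, Matrix.one_apply]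
  unfold embR
  rw [dif_pos (show i + s + 1 < k by omega), dif_pos hs]
  simp only [e0, e1]
  by_cases h : ∀ j : Fin k, j.val ≠ i + s → j.val ≠ i + s + 1 → f j = g j
  · rw [if_pos h, if_pos, if_pos, mul_one]
    · funext j
      apply h
      · intro hj; exact j.2 ⟨⟨s, by omega⟩, Fin.ext (by rw [hv, hj])⟩
      · intro hj; exact j.2 ⟨⟨s + 1, by omega⟩, Fin.ext (by rw [hv, hj]; simp; omega)⟩
    · intro j h1 h2
      apply h <;> rw [hv] <;> omega
  · rw [if_neg h]
    by_cases h1 : ∀ j : Fin m, j.val ≠ s → j.val ≠ s + 1 → f (φ j) = g (φ j)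
    · rw [if_neg (α := ℂ) (c := _ = _), mul_zero]
      intro h2
      apply h
      intro j hj1 hj2
      by_cases hj : j ∈ Set.range φ
      · obtain ⟨t, rfl⟩ := hj
        rw [hv] at hj1 hj2
        exact h1 t (by omega) (by omega)
      · exact congrFun h2 ⟨j, hj⟩
    · rw [if_neg h1, zero_mul]

/-- The shift embedding. -/
def shiftF {m k : ℕ} (i : ℕ) (h : i + m ≤ k) : Fin m → Fin k := fun j => ⟨i + j.val, by omega⟩

lemma shiftF_inj {m k : ℕ} (i : ℕ) (h : i + m ≤ k) : Function.Injective (shiftF (m := m) i h) := by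
  intro a b hab
  have := congrArg Fin.val hab
  simp only [shiftF] at this
  exact Fin.ext (by omega)

lemma embR_two {N : ℕ} (A : RMat N) :
    embR 2 A 0 = A.submatrix (finTwoArrowEquiv (Fin N)) (finTwoArrowEquiv (Fin N)) := by
  ext f g
  unfold embR
  rw [dif_pos (by norm_num), if_pos]
  · rfl
  · intro j h1 h2; omega

lemma embR_mul {N k : ℕ} (A B : RMat N) (i : ℕ) (h : i + 1 < k) :
    embR k (A * B) i = embR k A i * embR k B i := by
  have key := fun C : RMat N => embR_eq_extM 2 k i 0 C (by omega) (by omega)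
    (shiftF i (by omega)) (shiftF_inj i (by omega)) (fun _ => rfl)
  simp only [add_zero] at key
  rw [key, key, key, ← extM_mul, embR_two, embR_two, embR_two, Matrix.submatrix_mul_equiv]

lemma embR_one {N k : ℕ} (i : ℕ) (h : i + 1 < k) :
    embR k (1 : RMat N) i = 1 := by
  have key := fun C : RMat N => embR_eq_extM 2 k i 0 C (by omega) (by omega)
    (shiftF i (by omega)) (shiftF_inj i (by omega)) (fun _ => rfl)
  simp only [add_zero] at key
  rw [key, embR_two, Matrix.submatrix_one_equiv, extM_one]

lemma embR_smul_add {N k : ℕ} (c : ℂ) (A B : RMat N) (i : ℕ) (h : i + 1 < k) :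
    embR k (c • A + B) i = c • embR k A i + embR k B i := by
  ext f g
  simp only [embR, Matrix.add_apply, Matrix.smul_apply, dif_pos h]
  split_ifs <;> simp

lemma embR_braid {N k : ℕ} (R : RMat N) (hbr : IsBraiding R) (i : ℕ) (h : i + 2 < k) :
    embR k R i * embR k R (i + 1) * embR k R i
      = embR k R (i + 1) * embR k R i * embR k R (i + 1) := by
  have key := fun s hs => embR_eq_extM 3 k i s R (by omega) hs
    (shiftF i (by omega)) (shiftF_inj i (by omega)) (fun _ => rfl)
  have k0 := key 0 (by omega)
  have k1 := key 1 (by omega)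
  simp only [add_zero] at k0
  rw [k0, k1, ← extM_mul, ← extM_mul, ← extM_mul, ← extM_mul, hbr]

lemma embR_mul_apply_disj {N k : ℕ} (A B : RMat N) (i j : ℕ) (hi : i + 1 < k) (hj : j + 1 < k)
    (hd : i + 1 < j ∨ j + 1 < i) (f h : Fin k → Fin N) :
    (embR k A i * embR k B j) f h =
      if ∀ t : Fin k, t.val ≠ i → t.val ≠ i + 1 → t.val ≠ j → t.val ≠ j + 1 → f t = h t then
        A (f ⟨i, by omega⟩, f ⟨i + 1, hi⟩) (h ⟨i, by omega⟩, h ⟨i + 1, hi⟩) *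
        B (f ⟨j, by omega⟩, f ⟨j + 1, hj⟩) (h ⟨j, by omega⟩, h ⟨j + 1, hj⟩)
      else 0 := by
  classical
  rw [Matrix.mul_apply, Finset.sum_eq_single
    (fun t : Fin k => if t.val = i ∨ t.val = i + 1 then h t else f t)]
  · unfold embR
    rw [dif_pos hi, dif_pos hj, if_pos]
    · have n1 : ¬ (j = i ∨ j = i + 1) := by omega
      have n2 : ¬ (j + 1 = i ∨ j + 1 = i + 1) := by omega
      by_cases hc : ∀ t : Fin k, t.val ≠ i → t.val ≠ i + 1 → t.val ≠ j → t.val ≠ j + 1 → f t = h t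
      · rw [if_pos hc, if_pos]
        · simp only [n1, n2, if_false, true_or, or_true, if_true]
        · intro t h1 h2
          by_cases ht : t.val = i ∨ t.val = i + 1
          · simp [ht]
          · simp only [ht, if_false]
            exact hc t (by omega) (by omega) h1 h2
      · rw [if_neg hc, if_neg, mul_zero]
        intro h'
        apply hc
        intro t h1 h2 h3 h4
        simpa [h1, h2] using h' t h3 h4
    · intro t h1 h2
      simp [h1, h2]
  · intro g _ hg
    by_contra hne
    apply hg
    have hA : embR k A i f g ≠ 0 := left_ne_zero_of_mul hne
    have hB : embR k B j g h ≠ 0 := right_ne_zero_of_mul hne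
    unfold embR at hA hB
    rw [dif_pos hi] at hA
    rw [dif_pos hj] at hB
    have hA' := (ite_ne_right_iff.mp hA).1
    have hB' := (ite_ne_right_iff.mp hB).1
    funext t
    by_cases ht : t.val = i ∨ t.val = i + 1
    · simp only [ht, if_true]
      exact hB' t (by omega) (by omega)
    · simp only [ht, if_false]
      exact (hA' t (by omega) (by omega)).symm
  · intro hn; exact absurd (Finset.mem_univ _) hn

lemma embR_comm {N k : ℕ} (A B : RMat N) (i j : ℕ) (hi : i + 1 < k) (hj : j + 1 < k)
    (hd : i + 1 < j ∨ j + 1 < i) :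
    embR k A i * embR k B j = embR k B j * embR k A i := by
  ext f h
  rw [embR_mul_apply_disj A B i j hi hj hd, embR_mul_apply_disj B A j i hj hi hd.symm]
  have : (∀ t : Fin k, t.val ≠ i → t.val ≠ i + 1 → t.val ≠ j → t.val ≠ j + 1 → f t = h t) ↔
      (∀ t : Fin k, t.val ≠ j → t.val ≠ j + 1 → t.val ≠ i → t.val ≠ i + 1 → f t = h t) :=
    ⟨fun H t a b c d => H t c d a b, fun H t a b c d => H t c d a b⟩
  simp only [this]
  split_ifs
  · exact mul_comm _ _
  · rfl

lemma hecke_sq {N : ℕ} (R : RMat N) (q : ℂ) (hq0 : q ≠ 0) (hH : HeckeCond R q) :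
    R * R = (q - q⁻¹) • R + 1 := by
  unfold HeckeCond at hH
  simp only [sub_mul, mul_add, smul_mul_assoc, mul_smul_comm, one_mul, mul_one, smul_sub,
    smul_smul, inv_mul_cancel₀ hq0, one_smul] at hH
  rw [sub_smul, ← sub_eq_zero, ← neg_eq_zero, ← hH]
  abel

lemma qNum_one {q : ℂ} (hd : q - q⁻¹ ≠ 0) : qNum q 1 = 1 := by
  simp [qNum, hd]

lemma qNum_succ {q : ℂ} (hq : q ≠ 0) (hd : q - q⁻¹ ≠ 0) (n : ℕ) :
    q⁻¹ ^ n + qNum q n * q = qNum q (n + 1) := by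
  unfold qNum
  rw [pow_succ q, pow_succ q⁻¹, eq_div_iff hd, add_mul]
  have : (q ^ n - q⁻¹ ^ n) / (q - q⁻¹) * q * (q - q⁻¹) = (q ^ n - q⁻¹ ^ n) * q := by
    rw [mul_right_comm, div_mul_cancel₀ _ hd]
  rw [this]; ring

lemma qNum_succ' {q : ℂ} (hq : q ≠ 0) (hd : q - q⁻¹ ≠ 0) (n : ℕ) :
    q ^ n + qNum q n * q⁻¹ = qNum q (n + 1) := by
  unfold qNum
  rw [pow_succ q, pow_succ q⁻¹, eq_div_iff hd, add_mul]
  have : (q ^ n - q⁻¹ ^ n) / (q - q⁻¹) * q⁻¹ * (q - q⁻¹) = (q ^ n - q⁻¹ ^ n) * q⁻¹ := by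
    rw [mul_right_comm, div_mul_cancel₀ _ hd]
  rw [this]; ring

lemma qNum_coef {q : ℂ} (hq : q ≠ 0) (hd : q - q⁻¹ ≠ 0) (n : ℕ) :
    q⁻¹ ^ n * q⁻¹ ^ (n + 1) - q⁻¹ ^ n * qNum q (n + 1) * q⁻¹
      + qNum q n * q⁻¹ ^ (n + 1) * q = 0 := by
  rw [← qNum_succ hq hd n, pow_succ]
  field_simp
  ring

lemma Ssym_comm {N k : ℕ} (R : RMat N) (q : ℂ) : ∀ n : ℕ, ∀ i, n ≤ i → i + 1 < k →
    Ssym k R q n * embR k R i = embR k R i * Ssym k R q n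
  | 0, i, _, _ => by simp [Ssym]
  | 1, i, _, _ => by simp [Ssym]
  | n + 2, i, h1, h2 => by
    have ih : Commute (Ssym k R q (n + 1)) (embR k R i) :=
      Ssym_comm R q (n + 1) i (by omega) h2
    have hc : Commute (embR k R n) (embR k R i) :=
      embR_comm R R n i (by omega) h2 (by omega)
    rw [Ssym]
    exact ((ih.mul_left ((((Commute.one_left _).smul_left _)).add_left (hc.smul_left _))).mul_left
      ih).smul_left _

lemma Ssym_main {N : ℕ} (R : RMat N) (q : ℂ) (k : ℕ)
    (hq0 : q ≠ 0) (hd : q - q⁻¹ ≠ 0)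
    (hbr : IsBraiding R) (hH : HeckeCond R q)
    (hqk : ∀ j : ℕ, 2 ≤ j → j ≤ k → qNum q j ≠ 0) :
    ∀ n : ℕ, n + 1 ≤ k →
      Ssym k R q (n + 1) * Ssym k R q (n + 1) = Ssym k R q (n + 1) ∧
      Ssym k R q n * Ssym k R q (n + 1) = Ssym k R q (n + 1) ∧
      Ssym k R q (n + 1) * Ssym k R q n = Ssym k R q (n + 1) ∧
      ∀ i, i + 1 < n + 1 →
        embR k R i * Ssym k R q (n + 1) = q • Ssym k R q (n + 1) ∧
        Ssym k R q (n + 1) * embR k R i = q • Ssym k R q (n + 1) := by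
  have hsq : ∀ i, i + 1 < k → embR k R i * embR k R i = (q - q⁻¹) • embR k R i + 1 := by
    intro i hi
    rw [← embR_mul R R i hi, hecke_sq R q hq0 hH, embR_smul_add _ _ _ _ hi, embR_one i hi]
  intro n
  induction n with
  | zero => intro _; exact ⟨by simp [Ssym], by simp [Ssym], by simp [Ssym], fun i hi => by omega⟩
  | succ n ih =>
    intro hn
    obtain ⟨ih1, ihL, ihR, ih2⟩ := ih (by omega)
    have hne : qNum q (n + 2) ≠ 0 := hqk _ (by omega) hn
    set E := Ssym k R q (n + 1) with hEdef
    have hS : Ssym k R q (n + 1 + 1) = (qNum q (n + 2))⁻¹ •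
        (E * ((q⁻¹ ^ (n + 1)) • (1 : TMat N k ℂ) + (qNum q (n + 1)) • embR k R n) * E) := by
      rw [Ssym]
    have hlast : embR k R n * (E * ((q⁻¹ ^ (n + 1)) • (1 : TMat N k ℂ)
          + (qNum q (n + 1)) • embR k R n) * E)
          = q • (E * ((q⁻¹ ^ (n + 1)) • (1 : TMat N k ℂ) + (qNum q (n + 1)) • embR k R n) * E) ∧
        (E * ((q⁻¹ ^ (n + 1)) • (1 : TMat N k ℂ)
          + (qNum q (n + 1)) • embR k R n) * E) * embR k R n
          = q • (E * ((q⁻¹ ^ (n + 1)) • (1 : TMat N k ℂ)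
            + (qNum q (n + 1)) • embR k R n) * E) := by
      cases n with
      | zero =>
        have hE1 : E = 1 := by rw [hEdef]; simp [Ssym]
        have h0 := hsq 0 (by omega)
        simp only [hE1, one_mul, mul_one, zero_add, pow_one, qNum_one hd, one_smul, mul_add,
          add_mul, mul_smul_comm, smul_mul_assoc, h0, smul_add, smul_smul, mul_inv_cancel₀ hq0]
        constructor <;> module
      | succ n =>
        have hn1 : qNum q (n + 2) ≠ 0 := hqk _ (by omega) (by omega)
        set P := Ssym k R q (n + 1) with hPdef
        have hE : E = (qNum q (n + 2))⁻¹ •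
          (P * ((q⁻¹ ^ (n + 1)) • (1 : TMat N k ℂ) + (qNum q (n + 1)) • embR k R n) * P) := by
          rw [hEdef, Ssym]
        have hE' : qNum q (n + 2) • E =
          P * ((q⁻¹ ^ (n + 1)) • (1 : TMat N k ℂ) + (qNum q (n + 1)) • embR k R n) * P := by
          rw [hE, smul_smul, mul_inv_cancel₀ hn1, one_smul]
        have hPb := Ssym_comm (k := k) R q (n + 1) (n + 1) le_rfl (by omega)
        have hbrn := embR_braid R hbr n (show n + 2 < k by omega)
        have hb := hsq (n + 1) (by omega)
        have hc := qNum_coef hq0 hd (n + 1)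
        exact ⟨hecke_step_left P E _ _ q _ _ _ _ hq0 hn1 hE' ihL (ih2 n (by omega)).1 hPb hb hbrn hc,
          hecke_step_right P E _ _ q _ _ _ _ hq0 hn1 hE' ihR (ih2 n (by omega)).2 hPb hb hbrn hc⟩
    have hL : E * Ssym k R q (n + 1 + 1) = Ssym k R q (n + 1 + 1) := by
      rw [hS, mul_smul_comm, ← mul_assoc, ← mul_assoc, ih1]
    have hR : Ssym k R q (n + 1 + 1) * E = Ssym k R q (n + 1 + 1) := by
      rw [hS, smul_mul_assoc, mul_assoc _ E E, ih1]
    have hev : ∀ i, i + 1 < n + 1 + 1 →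
        embR k R i * Ssym k R q (n + 1 + 1) = q • Ssym k R q (n + 1 + 1) ∧
        Ssym k R q (n + 1 + 1) * embR k R i = q • Ssym k R q (n + 1 + 1) := by
      intro i hi
      by_cases hin : i = n
      · subst hin
        rw [hS, mul_smul_comm, smul_mul_assoc, hlast.1, hlast.2]
        exact ⟨smul_comm _ _ _, smul_comm _ _ _⟩
      · obtain ⟨e1, e2⟩ := ih2 i (by omega)
        constructor
        · rw [← hL, ← mul_assoc, e1, smul_mul_assoc]
        · rw [← hR, mul_assoc, e2, mul_smul_comm]
    refine ⟨?_, hL, hR, hev⟩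
    have e := (hev n (by omega)).2
    nth_rewrite 2 [hS]
    rw [mul_smul_comm, ← mul_assoc, ← mul_assoc, hR, mul_add, mul_smul_comm, mul_one,
      mul_smul_comm, e, smul_smul, ← add_smul, smul_mul_assoc, hR, smul_smul,
      qNum_succ hq0 hd (n + 1), inv_mul_cancel₀ hne, one_smul]

/-- eigenvalue property of the symmetrizer:
`S^(k) R_i = R_i S^(k) = q S^(k)` and `S^(k) R_i⁻¹ = R_i⁻¹ S^(k) = q⁻¹ S^(k)`
for every `1 ≤ i ≤ k−1`. -/
theorem statement9 {N : ℕ} (R Rinv : RMat N) (q : ℂ) (k : ℕ)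
    (hq0 : q ≠ 0) (hq1 : q ≠ 1) (hqm1 : q ≠ -1)
    (hinv : R * Rinv = 1) (hinv' : Rinv * R = 1)
    (hbr : IsBraiding R) (hH : HeckeCond R q)
    (hqk : ∀ j : ℕ, 2 ≤ j → j ≤ k → qNum q j ≠ 0) :
    ∀ i : ℕ, 1 ≤ i → i ≤ k - 1 →
      Ssym k R q k * embR k R (i - 1) = q • Ssym k R q k ∧
      embR k R (i - 1) * Ssym k R q k = q • Ssym k R q k ∧
      Ssym k R q k * embR k Rinv (i - 1) = q⁻¹ • Ssym k R q k ∧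
      embR k Rinv (i - 1) * Ssym k R q k = q⁻¹ • Ssym k R q k := by
  have hd : q - q⁻¹ ≠ 0 := by
    intro h
    have h2 : q * q = 1 := by
      have : q = q⁻¹ := sub_eq_zero.mp h
      nth_rewrite 2 [this]
      exact mul_inv_cancel₀ hq0
    rcases mul_self_eq_one_iff.mp h2 with h3 | h3
    · exact hq1 h3
    · exact hqm1 h3
  intro i hi1 hi2
  obtain ⟨n, rfl⟩ : ∃ n, k = n + 1 := ⟨k - 1, by omega⟩
  have hik : i - 1 + 1 < n + 1 := by omega
  obtain ⟨e1, e2⟩ := (Ssym_main R q (n + 1) hq0 hd hbr hH hqk n le_rfl).2.2.2 (i - 1) hik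
  have t1 : embR (n + 1) R (i - 1) * embR (n + 1) Rinv (i - 1) = 1 := by
    rw [← embR_mul _ _ _ hik, hinv, embR_one _ hik]
  have t2 : embR (n + 1) Rinv (i - 1) * embR (n + 1) R (i - 1) = 1 := by
    rw [← embR_mul _ _ _ hik, hinv', embR_one _ hik]
  refine ⟨e2, e1, ?_, ?_⟩
  · have h := congrArg (fun x => q⁻¹ • (x * embR (n + 1) Rinv (i - 1))) e2
    simp only [mul_assoc, t1, mul_one, smul_mul_assoc, smul_smul, inv_mul_cancel₀ hq0,
      one_smul] at h
    exact h.symm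
  · have h := congrArg (fun x => q⁻¹ • (embR (n + 1) Rinv (i - 1) * x)) e1
    simp only [← mul_assoc, t2, one_mul, mul_smul_comm, smul_smul, inv_mul_cancel₀ hq0,
      one_smul] at h
    exact h.symm
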